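/- Let V : ℤ → ℝ be p-periodic (p ≥ 1) with Schrödinger operator H, and let E ∈ ℝ. Then (E : ℂ) ∈ σ(H) if and only if |tr A_p(E,V)| ≤ 2. -/

import Mathlib

open Filter Matrix

/-- The transfer matrix `A_N(E,V) = ∏_{n=1}^N [[E − V(N−n), −1],[1,0]]`,
with the `n = 1` factor leftmost. -/
noncomputable def transferMatrix (V : ℤ → ℝ) (E : ℝ) (N : ℕ) : Matrix (Fin 2) (Fin 2) ℝ :=
  (((List.range N).map
    (fun n => !![E - V ((N : ℤ) - ((n : ℤ) + 1)), -1; (1 : ℝ), 0])).prod)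

/-- Operator norm (Euclidean, i.e. ℓ²→ℓ²) of a 2×2 real matrix. -/
noncomputable def opNorm (A : Matrix (Fin 2) (Fin 2) ℝ) : ℝ :=
  ‖LinearMap.toContinuousLinearMap (Matrix.toEuclideanLin A)‖

/-- `H` is a Schrödinger operator on `ℓ²(ℤ,ℂ)` with potential `V`. -/
def IsSchrodingerOp (V : ℤ → ℝ)
    (H : lp (fun _ : ℤ => ℂ) 2 →L[ℂ] lp (fun _ : ℤ => ℂ) 2) : Prop :=
  ∀ ψ : lp (fun _ : ℤ => ℂ) 2, ∀ n : ℤ,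
    H ψ n = ψ (n + 1) + ψ (n - 1) + (V n : ℂ) * ψ n

/-- `V` is `p`-periodic. -/
def IsPeriodic (V : ℤ → ℝ) (p : ℕ) : Prop :=
  ∀ n : ℤ, V (n + (p : ℤ)) = V n

/-- `V` is limit-periodic: a uniform limit of periodic potentials. -/
def IsLimitPeriodic (V : ℤ → ℝ) : Prop :=
  ∃ (W : ℕ → ℤ → ℝ) (p : ℕ → ℕ),
    (∀ k, 1 ≤ p k ∧ IsPeriodic (W k) (p k)) ∧
    (∀ ε > (0 : ℝ), ∃ K : ℕ, ∀ k ≥ K, ∀ n : ℤ, |V n - W k n| ≤ ε)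

/-- `(1/N)·log‖A_N(E,V)‖`. -/
noncomputable def logNormRate (V : ℤ → ℝ) (E : ℝ) (N : ℕ) : ℝ :=
  (1 / (N : ℝ)) * Real.log (opNorm (transferMatrix V E N))

/-- Individual (upper) Lyapunov exponent `limsup_N (1/N) log‖A_N(E,V)‖`. -/
noncomputable def lyapExp (V : ℤ → ℝ) (E : ℝ) : ℝ :=
  Filter.limsup (fun N : ℕ => logNormRate V E N) Filter.atTop

/-- Bottom of the (real trace of the) spectrum of `H`. -/
noncomputable def specInf (H : lp (fun _ : ℤ => ℂ) 2 →L[ℂ] lp (fun _ : ℤ => ℂ) 2) : ℝ :=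
  sInf {x : ℝ | (x : ℂ) ∈ spectrum ℂ H}

/-!
Put `D = tr A_p(E, V)` and let `S` be the translation on `ℓ²(ℤ)`. Modulo the left ideal generated
by `E - H` in the algebra of bounded operators, the relation `S = (E - V) - S⁻¹` holds, so positive
powers of `S` reduce to the transfer matrices acting on `(1, S⁻¹)`. Periodicity and `det A_p = 1`
then give `S ^ p + S ^ (-p) ≡ D`, as in the Cayley–Hamilton theorem. If `|D| > 2`, the operator
`D - (S ^ p + S ^ (-p))` is invertible, since translations have norm at most `1`; hence `E - H` is
left invertible and, being self-adjoint, invertible.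

If `|D| ≤ 2`, the monodromy matrix has an eigenvalue on the unit circle, which yields a bounded
nonzero Floquet solution `u` of the eigenvalue equation. If `E - H` were invertible, the Wronskian
of `u` and `G = (E - H)⁻¹ δ_m` would vanish at both ends and be constant except for a jump of size
`u m` at `m`; so `u m = 0` for every `m`, a contradiction.
-/

open scoped ENNReal Topology lp

section Sequences

theorem finite_range_of_periodic {X : Type*} {f : ℤ → X} {c : ℤ} (hf : Function.Periodic f c)
    (hc : 0 < c) : (Set.range f).Finite :=
  hf.image_Ioc hc 0 ▸ (Set.finite_Ioc _ _).image f

theorem exists_int_orbit {X : Type*} {f : ℤ → X → X} (hf : ∀ n, Function.Surjective (f n))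
    (x : X) : ∃ φ : ℤ → X, φ 0 = x ∧ ∀ n, φ (n + 1) = f n (φ n) := by
  choose g hg using hf
  refine ⟨fun n => n.inductionOn' 0 x (fun k _ => f k) (fun k _ => g (k - 1)),
    Int.inductionOn'_self .., fun n => ?_⟩
  rcases le_or_gt 0 n with hn | hn
  · exact Int.inductionOn'_add_one hn
  · have backward := Int.inductionOn'_sub_one (motive := fun _ => X) (zero := x)
      (succ := fun k _ => f k) (pred := fun k _ => g (k - 1)) (Int.add_one_le_iff.mpr hn)
    simp only [add_sub_cancel_right] at backward
    beta_reduce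
    rw [backward, hg]

theorem eq_sub_one_of_tendsto_cofinite {X : Type*} [TopologicalSpace X] [T2Space X]
    {w : ℤ → X} {a : X} (hw : Tendsto w cofinite (𝓝 a)) {m : ℤ}
    (hm : ∀ n ≠ m, w n = w (n - 1)) : w m = w (m - 1) := by
  have const_right (k : ℕ) : w (m + k) = w m := by
    induction k with
    | zero => simp
    | succ k ih => rw [hm _ (by lia), ← ih]; congr 1; lia
  have const_left (k : ℕ) : w (m - 1 - k) = w (m - 1) := by
    induction k with
    | zero => simp
    | succ k ih => rw [← ih, hm (m - 1 - k) (by lia)]; congr 1; lia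
  have lim_along {f : ℕ → ℤ} (hf : Function.Injective f) {b : X} (hb : ∀ k, w (f k) = b) : b = a :=
    tendsto_nhds_unique (tendsto_const_nhds.congr fun k => (hb k).symm)
      (hw.comp hf.tendsto_cofinite)
  rw [lim_along (fun _ _ h => by simpa using h) const_right,
    lim_along (fun _ _ h => by simpa using h) const_left]

theorem tendsto_cofinite_zero_of_memℓp {ι F : Type*} [NormedAddCommGroup F] {q : ℝ≥0∞}
    (hq : 0 < q.toReal) {ψ : ι → F} (hψ : Memℓp ψ q) : Tendsto ψ cofinite (𝓝 0) := by
  rw [tendsto_zero_iff_norm_tendsto_zero]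
  simpa [hq.ne', Real.rpow_rpow_inv] using
    (hψ.summable hq).tendsto_cofinite_zero.rpow_const (p := q.toReal⁻¹) (.inr (by positivity))

end Sequences

section TransferMatrix

variable (V : ℤ → ℝ) (E : ℝ)

/-- The one-step transfer matrix at site `n`, mapping `(u n, u (n - 1))` to `(u (n + 1), u n)` for
every solution `u` of `u (n + 1) + u (n - 1) + V n * u n = E * u n`. -/
def stepMatrix (n : ℤ) : Matrix (Fin 2) (Fin 2) ℝ :=
  !![E - V n, -1; 1, 0]

/-- The transfer matrix across the `k` sites `n, …, n + k - 1`, mapping `(u n, u (n - 1))` to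
`(u (n + k), u (n + k - 1))` for every solution `u`. -/
noncomputable def transferMatrixFrom (n : ℤ) (k : ℕ) : Matrix (Fin 2) (Fin 2) ℝ :=
  transferMatrix (fun j => V (n + j)) E k

theorem det_stepMatrix (n : ℤ) : (stepMatrix V E n).det = 1 := by simp [stepMatrix]

theorem transferMatrixFrom_base_zero (k : ℕ) :
    transferMatrixFrom V E 0 k = transferMatrix V E k := by
  simp [transferMatrixFrom]

theorem transferMatrixFrom_zero (n : ℤ) : transferMatrixFrom V E n 0 = 1 := by
  simp [transferMatrixFrom, transferMatrix]

theorem transferMatrixFrom_succ (n : ℤ) (k : ℕ) :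
    transferMatrixFrom V E n (k + 1) = stepMatrix V E (n + k) * transferMatrixFrom V E n k := by
  simp [transferMatrixFrom, transferMatrix, stepMatrix, List.range_succ_eq_map,
    List.flatMap_map, List.map_flatMap]

theorem transferMatrixFrom_succ' (n : ℤ) (k : ℕ) :
    transferMatrixFrom V E n (k + 1) = transferMatrixFrom V E (n + 1) k * stepMatrix V E n := by
  induction k with
  | zero => simp [transferMatrixFrom_succ, transferMatrixFrom_zero]
  | succ k ih =>
    rw [transferMatrixFrom_succ, ih, transferMatrixFrom_succ V E (n + 1), ← mul_assoc]
    congr 3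
    lia

theorem det_transferMatrixFrom (n : ℤ) (k : ℕ) : (transferMatrixFrom V E n k).det = 1 := by
  induction k with
  | zero => simp [transferMatrixFrom_zero]
  | succ k ih => rw [transferMatrixFrom_succ, Matrix.det_mul, det_stepMatrix, ih, one_mul]

variable {V} {p : ℕ}

theorem IsPeriodic.stepMatrix_add (hV : IsPeriodic V p) (n : ℤ) :
    stepMatrix V E (n + p) = stepMatrix V E n := by
  rw [stepMatrix, hV, stepMatrix]

theorem IsPeriodic.transferMatrixFrom_add (hV : IsPeriodic V p) (n : ℤ) (k : ℕ) :
    transferMatrixFrom V E (n + p) k = transferMatrixFrom V E n k := by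
  have hshift : (fun j => V (n + p + j)) = fun j => V (n + j) :=
    funext fun j => by rw [add_right_comm, hV]
  rw [transferMatrixFrom, hshift, transferMatrixFrom]

theorem IsPeriodic.trace_transferMatrixFrom (hV : IsPeriodic V p) (n : ℤ) :
    (transferMatrixFrom V E n p).trace = (transferMatrix V E p).trace := by
  have hstep : Function.Periodic (fun m => (transferMatrixFrom V E m p).trace) 1 := fun m => by
    have hT : IsUnit (stepMatrix V E m) := by simp [Matrix.isUnit_iff_isUnit_det, det_stepMatrix]
    have hconj : transferMatrixFrom V E (m + 1) p * stepMatrix V E m =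
        stepMatrix V E m * transferMatrixFrom V E m p := by
      rw [← transferMatrixFrom_succ', transferMatrixFrom_succ, hV.stepMatrix_add]
    beta_reduce
    rw [← Matrix.trace_conj hT (transferMatrixFrom V E m p), ← hconj, mul_assoc,
      Matrix.mul_nonsing_inv _ ((Matrix.isUnit_iff_isUnit_det _).mp hT), mul_one]
  simpa [transferMatrixFrom_base_zero] using hstep.int_mul_eq n

end TransferMatrix

section Operators

theorem memℓp_top_comp {α β F : Type*} [NormedAddCommGroup F] {f : α → F} (hf : Memℓp f ∞)
    (e : β → α) : Memℓp (fun b => f (e b)) ∞ :=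
  memℓp_infty <| (memℓp_infty_iff.mp hf).mono (Set.range_comp_subset_range e fun a => ‖f a‖)

/-- The translation `(shift k ψ) n = ψ (n + k)` on `ℓ²(ℤ)`. -/
noncomputable def shift (k : ℤ) : ℓ²(ℤ, ℂ) →L[ℂ] ℓ²(ℤ, ℂ) :=
  LinearMap.mkContinuous
    { toFun ψ := ⟨fun n => ψ (n + k), memℓp_gen <|
        (Equiv.addRight k).summable_iff.mpr ((lp.memℓp ψ).summable (by simp))⟩
      map_add' _ _ := rfl
      map_smul' _ _ := rfl }
    1 fun ψ => by
      rw [one_mul, lp.norm_eq_tsum_rpow (by simp), lp.norm_eq_tsum_rpow (by simp)]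
      exact ((Equiv.addRight k).tsum_eq fun n => ‖ψ n‖ ^ (2 : ℝ≥0∞).toReal) ▸ le_rfl

@[simp]
theorem shift_apply (k : ℤ) (ψ : ℓ²(ℤ, ℂ)) (n : ℤ) : shift k ψ n = ψ (n + k) := rfl

theorem norm_shift_le (k : ℤ) : ‖shift k‖ ≤ 1 :=
  LinearMap.mkContinuous_norm_le _ zero_le_one _

theorem star_shift (k : ℤ) : star (shift k) = shift (-k) := by
  refine Eq.symm ((ContinuousLinearMap.eq_adjoint_iff _ _).mpr fun ψ φ => ?_)
  rw [lp.inner_eq_tsum, lp.inner_eq_tsum, ← (Equiv.addRight k).tsum_eq]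
  simp

/-- Multiplication by the bounded function `f` on `ℓ²(ℤ)`. -/
noncomputable def mulOp (f : ℤ → ℂ) (hf : Memℓp f ∞) : ℓ²(ℤ, ℂ) →L[ℂ] ℓ²(ℤ, ℂ) :=
  lp.mapCLM 2 (fun n => f n • ContinuousLinearMap.id ℂ ℂ) (norm_nonneg (⟨f, hf⟩ : ℓ^∞(ℤ, ℂ)))
    fun n => by simpa [norm_smul] using lp.norm_apply_le_norm ENNReal.top_ne_zero ⟨f, hf⟩ n

@[simp]
theorem mulOp_apply {f : ℤ → ℂ} (hf : Memℓp f ∞) (ψ : ℓ²(ℤ, ℂ)) (n : ℤ) :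
    mulOp f hf ψ n = f n * ψ n := rfl

variable {T : ℓ²(ℤ, ℂ) →L[ℂ] ℓ²(ℤ, ℂ)}

theorem memℓp_top_of_apply_eq_mul {f : ℤ → ℂ} (hT : ∀ ψ n, T ψ n = f n * ψ n) : Memℓp f ∞ := by
  refine memℓp_infty ⟨‖T‖, Set.forall_mem_range.mpr fun n => ?_⟩
  let δ : ℓ²(ℤ, ℂ) := lp.single 2 n 1
  calc ‖f n‖ = ‖T δ n‖ := by simp [hT, δ]
    _ ≤ ‖T δ‖ := lp.norm_apply_le_norm two_ne_zero _ _
    _ ≤ ‖T‖ := by simpa [δ, lp.norm_single] using T.le_opNorm δ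

theorem isSelfAdjoint_of_apply_eq_ofReal_mul {f : ℤ → ℝ} (hT : ∀ ψ n, T ψ n = f n * ψ n) :
    IsSelfAdjoint T := by
  refine Eq.symm ((ContinuousLinearMap.eq_adjoint_iff _ _).mpr fun ψ φ => ?_)
  rw [lp.inner_eq_tsum, lp.inner_eq_tsum]
  exact tsum_congr fun n => by simp [hT]; ring

end Operators


section ShiftReduction

theorem isUnit_of_isSelfAdjoint_of_mul_eq_one {R : Type*} [Monoid R] [StarMul R] {a b : R}
    (ha : IsSelfAdjoint a) (h : b * a = 1) : IsUnit a := by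
  have hright : a * star b = 1 := by rw [← ha.star_eq, ← star_mul, h, star_one]
  exact ⟨⟨a, b, left_inv_eq_right_inv h hright ▸ hright, h⟩, rfl⟩

theorem isUnit_algebraMap_sub_shift_add_shift {z : ℂ} (hz : 2 < ‖z‖) (k : ℤ) :
    IsUnit (algebraMap ℂ (ℓ²(ℤ, ℂ) →L[ℂ] ℓ²(ℤ, ℂ)) z - (shift k + shift (-k))) := by
  refine spectrum.mem_resolventSet_of_norm_lt_mul (lt_of_le_of_lt ?_ hz)
  calc ‖shift k + shift (-k)‖ * ‖(1 : ℓ²(ℤ, ℂ) →L[ℂ] ℓ²(ℤ, ℂ))‖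
      ≤ (1 + 1) * 1 := by
        gcongr
        · exact (norm_add_le _ _).trans (add_le_add (norm_shift_le _) (norm_shift_le _))
        · exact ContinuousLinearMap.norm_id_le
    _ = 2 := by norm_num

variable {V : ℤ → ℝ} {H : ℓ²(ℤ, ℂ) →L[ℂ] ℓ²(ℤ, ℂ)} (hH : IsSchrodingerOp V H)
include hH

theorem IsSchrodingerOp.sub_shift_apply (ψ : ℓ²(ℤ, ℂ)) (n : ℤ) :
    (H - shift 1 - shift (-1)) ψ n = V n * ψ n := by
  simp only [_root_.sub_apply, AddSubgroupClass.coe_sub, PreLp.sub_apply, hH ψ n, shift_apply,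
    ← sub_eq_add_neg]
  ring

theorem IsSchrodingerOp.algebraMap_sub_apply (z : ℂ) (ψ : ℓ²(ℤ, ℂ)) (n : ℤ) :
    (algebraMap ℂ (ℓ²(ℤ, ℂ) →L[ℂ] ℓ²(ℤ, ℂ)) z - H) ψ n =
      z * ψ n - (ψ (n + 1) + ψ (n - 1) + V n * ψ n) := by
  rw [← hH ψ n]
  rfl

theorem IsSchrodingerOp.isSelfAdjoint : IsSelfAdjoint H := by
  have hshift : IsSelfAdjoint (shift 1 + shift (-1)) := by
    simp [IsSelfAdjoint, star_shift, add_comm]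
  have hmul := isSelfAdjoint_of_apply_eq_ofReal_mul hH.sub_shift_apply
  simpa [sub_sub] using hmul.add hshift

theorem IsSchrodingerOp.memℓp_transferMatrixFrom (E : ℝ) (k : ℕ) (i j : Fin 2) :
    Memℓp (fun n => (transferMatrixFrom V E n k i j : ℂ)) ∞ := by
  have hconst (c : ℂ) : Memℓp (fun _ : ℤ => c) ∞ :=
    memℓp_infty ⟨‖c‖, Set.forall_mem_range.mpr fun _ => le_rfl⟩
  have hV : Memℓp (fun n => (E - V n : ℂ)) ∞ :=
    (hconst E).sub (memℓp_top_of_apply_eq_mul hH.sub_shift_apply)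
  induction k generalizing i j with
  | zero => simpa only [transferMatrixFrom_zero] using hconst _
  | succ k ih =>
    fin_cases i
    · simpa [transferMatrixFrom_succ, stepMatrix, Matrix.mul_apply, Fin.sum_univ_two,
        Pi.sub_def, Pi.mul_def, ← sub_eq_add_neg] using
          ((memℓp_top_comp hV (· + (k : ℤ))).infty_mul (ih 0 j)).sub (ih 1 j)
    · simpa [transferMatrixFrom_succ, stepMatrix, Matrix.mul_apply, Fin.sum_univ_two] using ih 0 j

/-- The operator `P i 0 + P i 1 * shift (-1)`, with `P` the transfer matrix across `k` sites at
energy `E`: the normal form of `shift (k - i)` modulo the left ideal generated by `E - H`. -/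
noncomputable def IsSchrodingerOp.reducedShift (E : ℝ) (k : ℕ) (i : Fin 2) :
    ℓ²(ℤ, ℂ) →L[ℂ] ℓ²(ℤ, ℂ) :=
  mulOp _ (hH.memℓp_transferMatrixFrom E k i 0) +
    mulOp _ (hH.memℓp_transferMatrixFrom E k i 1) * shift (-1)

theorem IsSchrodingerOp.reducedShift_apply (E : ℝ) (k : ℕ) (i : Fin 2) (ψ : ℓ²(ℤ, ℂ)) (n : ℤ) :
    hH.reducedShift E k i ψ n =
      transferMatrixFrom V E n k i 0 * ψ n + transferMatrixFrom V E n k i 1 * ψ (n - 1) := rfl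

theorem IsSchrodingerOp.shift_sub_reducedShift_mem_span (E : ℝ) (k : ℕ) (i : Fin 2) :
    shift (k - i.val) - hH.reducedShift E k i ∈
      Ideal.span {algebraMap ℂ (ℓ²(ℤ, ℂ) →L[ℂ] ℓ²(ℤ, ℂ)) E - H} := by
  have hK := hH.algebraMap_sub_apply E
  generalize algebraMap ℂ (ℓ²(ℤ, ℂ) →L[ℂ] ℓ²(ℤ, ℂ)) (E : ℂ) - H = K at hK ⊢
  induction k with
  | zero =>
    have hzero : shift ((0 : ℕ) - i.val) - hH.reducedShift E 0 i = 0 := by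
      ext ψ n
      fin_cases i <;> simp [hH.reducedShift_apply, transferMatrixFrom_zero, ← sub_eq_add_neg]
    exact hzero ▸ zero_mem _
  | succ k ih =>
    have hbdd := memℓp_top_comp (hH.memℓp_transferMatrixFrom E k i 0) (· + 1)
    have hrec : shift ((k + 1 : ℕ) - i.val) - hH.reducedShift E (k + 1) i =
        shift 1 * (shift (k - i.val) - hH.reducedShift E k i) - mulOp _ hbdd * K := by
      ext ψ n
      have hcol₀ : transferMatrixFrom V E n (k + 1) i 0 =
          transferMatrixFrom V E (n + 1) k i 0 * (E - V n) +
            transferMatrixFrom V E (n + 1) k i 1 := by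
        simp [transferMatrixFrom_succ', stepMatrix, Matrix.mul_apply]
      have hcol₁ : transferMatrixFrom V E n (k + 1) i 1 =
          -transferMatrixFrom V E (n + 1) k i 0 := by
        simp [transferMatrixFrom_succ', stepMatrix, Matrix.mul_apply]
      have hsite : n + ((k + 1 : ℕ) - i.val : ℤ) = n + 1 + (k - i.val) := by lia
      change ψ (n + ((k + 1 : ℕ) - i.val : ℤ)) - hH.reducedShift E (k + 1) i ψ n =
        ψ (n + 1 + (k - i.val)) - hH.reducedShift E k i ψ (n + 1) -
          transferMatrixFrom V E (n + 1) k i 0 * K ψ n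
      simp only [hH.reducedShift_apply, hcol₀, hcol₁, hK, hsite, add_sub_cancel_right]
      push_cast
      ring
    rw [hrec]
    exact sub_mem (Ideal.mul_mem_left _ _ ih)
      (Ideal.mul_mem_left _ _ (Ideal.mem_span_singleton_self _))

theorem IsSchrodingerOp.trace_sub_shift_mem_span {p : ℕ} (hV : IsPeriodic V p) (E : ℝ) :
    algebraMap ℂ (ℓ²(ℤ, ℂ) →L[ℂ] ℓ²(ℤ, ℂ)) (transferMatrix V E p).trace -
        (shift p + shift (-p)) ∈
      Ideal.span {algebraMap ℂ (ℓ²(ℤ, ℂ) →L[ℂ] ℓ²(ℤ, ℂ)) E - H} := by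
  let X (i : Fin 2) := shift (p - i.val) - hH.reducedShift E p i
  have hX (i : Fin 2) : X i ∈ Ideal.span {algebraMap ℂ (ℓ²(ℤ, ℂ) →L[ℂ] ℓ²(ℤ, ℂ)) E - H} :=
    hH.shift_sub_reducedShift_mem_span E p i
  -- Inverting the transfer matrix, of determinant `1`, also reduces `shift (-p)`.
  have hcombination : algebraMap ℂ (ℓ²(ℤ, ℂ) →L[ℂ] ℓ²(ℤ, ℂ)) (transferMatrix V E p).trace -
      (shift p + shift (-p)) =
        mulOp _ (hH.memℓp_transferMatrixFrom E p 1 1) * shift (-p) * X 0 -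
          mulOp _ (hH.memℓp_transferMatrixFrom E p 0 1) * shift (-p) * X 1 - X 0 := by
    ext ψ n
    have hX_apply (i : Fin 2) (m : ℤ) : X i ψ m = ψ (m + (p - i.val)) -
        (transferMatrixFrom V E m p i 0 * ψ m + transferMatrixFrom V E m p i 1 * ψ (m - 1)) := rfl
    have hperiod : transferMatrixFrom V E (n + -p) p = transferMatrixFrom V E n p := by
      rw [← hV.transferMatrixFrom_add, neg_add_cancel_right]
    have hdet : (transferMatrixFrom V E n p 0 0 * transferMatrixFrom V E n p 1 1 -
        transferMatrixFrom V E n p 0 1 * transferMatrixFrom V E n p 1 0 : ℂ) = 1 := mod_cast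
      (Matrix.det_fin_two _).symm.trans (det_transferMatrixFrom V E n p)
    have htrace : ((transferMatrix V E p).trace : ℂ) =
        transferMatrixFrom V E n p 0 0 + transferMatrixFrom V E n p 1 1 := mod_cast
      (hV.trace_transferMatrixFrom E n).symm.trans (Matrix.trace_fin_two _)
    have hsite₀ : n + -p + (p - (0 : Fin 2).val : ℤ) = n := by simp
    have hsite₁ : n + -p + (p - (1 : Fin 2).val : ℤ) = n - 1 := by
      rw [Fin.val_one]; lia
    have hsite₂ : n + (p - (0 : Fin 2).val : ℤ) = n + p := by simp
    change (transferMatrix V E p).trace * ψ n - (ψ (n + p) + ψ (n + -p)) =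
      transferMatrixFrom V E n p 1 1 * X 0 ψ (n + -p) -
        transferMatrixFrom V E n p 0 1 * X 1 ψ (n + -p) - X 0 ψ n
    simp only [hX_apply, hperiod, hsite₀, hsite₁, hsite₂]
    linear_combination ψ n * htrace + ψ (n + -p) * hdet
  rw [hcombination]
  exact sub_mem (sub_mem (Ideal.mul_mem_left _ _ (hX 0)) (Ideal.mul_mem_left _ _ (hX 1))) (hX 0)

theorem IsSchrodingerOp.notMem_spectrum_of_two_lt_abs_trace {p : ℕ} (hV : IsPeriodic V p) {E : ℝ}
    (hE : 2 < |(transferMatrix V E p).trace|) : (E : ℂ) ∉ spectrum ℂ H := by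
  rw [spectrum.notMem_iff]
  have hunit := isUnit_algebraMap_sub_shift_add_shift
    (z := (transferMatrix V E p).trace) (by simpa using hE) p
  obtain ⟨B, hB⟩ : ∃ B, B * (algebraMap ℂ _ (E : ℂ) - H) = 1 := Ideal.mem_span_singleton'.mp <|
    Ideal.eq_top_of_isUnit_mem _ (hH.trace_sub_shift_mem_span hV E) hunit ▸ Submodule.mem_top
  refine isUnit_of_isSelfAdjoint_of_mul_eq_one (.sub ?_ hH.isSelfAdjoint) hB
  exact .algebraMap _ (Complex.conj_ofReal E)

end ShiftReduction

section Solutions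

variable (V : ℤ → ℝ) (z : ℂ)

/-- The sequences, of arbitrary growth, solving the eigenvalue equation of the Schrödinger operator
with potential `V` at energy `z`. -/
def solutionSpace : Submodule ℂ (ℤ → ℂ) where
  carrier := {u | ∀ n, u (n + 1) + u (n - 1) + V n * u n = z * u n}
  add_mem' hu hv n := by
    simp only [Pi.add_apply]
    linear_combination hu n + hv n
  zero_mem' n := by simp
  smul_mem' c u hu n := by
    simp only [Pi.smul_apply, smul_eq_mul]
    linear_combination c * hu n

theorem exists_mem_solutionSpace (x y : ℂ) : ∃ u ∈ solutionSpace V z, u 0 = x ∧ u (-1) = y := by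
  obtain ⟨φ, hφ₀, hφ⟩ := exists_int_orbit
    (f := fun n (v : ℂ × ℂ) => ((z - V n) * v.1 - v.2, v.1))
    (fun n v => ⟨(v.2, (z - V n) * v.2 - v.1), by simp⟩) (x, y)
  have hsnd (n : ℤ) : (φ n).2 = (φ (n - 1)).1 := by simpa using congrArg Prod.snd (hφ (n - 1))
  refine ⟨fun n => (φ n).1, fun n => ?_, by simp [hφ₀], ?_⟩
  · linear_combination congrArg Prod.fst (hφ n) - hsnd n
  · simpa [hφ₀] using (hsnd 0).symm

variable {V z} {u v : ℤ → ℂ}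

theorem eq_of_mem_solutionSpace (hu : u ∈ solutionSpace V z) (hv : v ∈ solutionSpace V z)
    (h₀ : u 0 = v 0) (h₁ : u (-1) = v (-1)) : u = v := by
  have key (n : ℤ) : u n = v n ∧ u (n - 1) = v (n - 1) := by
    induction n using Int.induction_on with
    | zero => exact ⟨h₀, h₁⟩
    | succ k ih =>
      rw [add_sub_cancel_right]
      exact ⟨by linear_combination hu k - hv k + (z - V k) * ih.1 - ih.2, ih.1⟩
    | pred k ih =>
      refine ⟨ih.2, ?_⟩
      have hu' := hu (-k - 1)
      have hv' := hv (-k - 1)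
      rw [sub_add_cancel] at hu' hv'
      linear_combination hu' - hv' + (z - V (-k - 1)) * ih.2 - ih.1
  exact funext fun n => (key n).1

theorem transferMatrixFrom_mulVec {E : ℝ} (hu : u ∈ solutionSpace V E) (n : ℤ) (k : ℕ) :
    (transferMatrixFrom V E n k).map (algebraMap ℝ ℂ) *ᵥ ![u n, u (n - 1)] =
      ![u (n + k), u (n + k - 1)] := by
  induction k with
  | zero => simp [transferMatrixFrom_zero]
  | succ k ih =>
    rw [transferMatrixFrom_succ, Matrix.map_mul, ← Matrix.mulVec_mulVec, ih]
    have hnext : (E - V (n + k)) * u (n + k) - u (n + k - 1) = u (n + k + 1) := by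
      linear_combination -hu (n + k)
    ext i
    fin_cases i <;> simp [stepMatrix, ← sub_eq_add_neg, ← add_assoc, hnext]

theorem IsPeriodic.translate_mem_solutionSpace {p : ℕ} (hV : IsPeriodic V p)
    (hu : u ∈ solutionSpace V z) : (fun n => u (n + p)) ∈ solutionSpace V z := fun n => by
  simpa [hV n, add_right_comm, add_sub_right_comm] using hu (n + p)

end Solutions

section Floquet

theorem exists_mulVec_eq_smul_of_trace_eq_add_of_det_eq_mul {K : Type*} [Field K]
    {M : Matrix (Fin 2) (Fin 2) K} {a b : K} (htr : M.trace = a + b) (hdet : M.det = a * b) :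
    ∃ w ≠ 0, M *ᵥ w = a • w := by
  obtain ⟨w, hw, hMw⟩ := Matrix.exists_mulVec_eq_zero_iff.mpr <|
    show (M - a • (1 : Matrix (Fin 2) (Fin 2) K)).det = 0 by
      rw [Matrix.trace_fin_two] at htr
      rw [Matrix.det_fin_two] at hdet
      simp only [Matrix.det_fin_two, Matrix.sub_apply, Matrix.smul_apply, Matrix.one_fin_two,
        Matrix.of_apply, Matrix.cons_val', Matrix.cons_val_zero, Matrix.cons_val_one, smul_eq_mul,
        Matrix.cons_val_fin_one]
      linear_combination hdet - a * htr
  rw [Matrix.sub_mulVec, Matrix.smul_mulVec, Matrix.one_mulVec, sub_eq_zero] at hMw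
  exact ⟨w, hw, hMw⟩

theorem exists_norm_eq_one_mulVec_eq_smul {M : Matrix (Fin 2) (Fin 2) ℝ} (hdet : M.det = 1)
    (htr : |M.trace| ≤ 2) :
    ∃ l : ℂ, ‖l‖ = 1 ∧ ∃ w ≠ 0, M.map (algebraMap ℝ ℂ) *ᵥ w = l • w := by
  obtain ⟨hlower, hupper⟩ := abs_le.mp htr
  set θ := Real.arccos (M.trace / 2)
  refine ⟨Complex.exp (θ * Complex.I), Complex.norm_exp_ofReal_mul_I θ,
    exists_mulVec_eq_smul_of_trace_eq_add_of_det_eq_mul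
      (b := Complex.exp (-θ * Complex.I)) ?_ ?_⟩
  · calc (M.map (algebraMap ℝ ℂ)).trace = ((2 * Real.cos θ : ℝ) : ℂ) := by
          rw [Real.cos_arccos (by linarith) (by linarith), mul_div_cancel₀ _ two_ne_zero]
          exact (AddMonoidHom.map_trace (algebraMap ℝ ℂ) M).symm
      _ = Complex.exp (θ * Complex.I) + Complex.exp (-θ * Complex.I) := by
          rw [← Complex.two_cos]
          push_cast
          rfl
  · calc (M.map (algebraMap ℝ ℂ)).det = 1 := by
          rw [← RingHom.mapMatrix_apply, ← RingHom.map_det, hdet, map_one]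
      _ = Complex.exp (θ * Complex.I) * Complex.exp (-θ * Complex.I) := by
          simp [← Complex.exp_add]

variable {V : ℤ → ℝ} {p : ℕ} {E : ℝ}

theorem IsPeriodic.exists_floquet_solution (hV : IsPeriodic V p)
    (hE : |(transferMatrix V E p).trace| ≤ 2) :
    ∃ u ∈ solutionSpace V E, u ≠ 0 ∧ ∃ l : ℂ, ‖l‖ = 1 ∧ ∀ n, u (n + p) = l * u n := by
  rw [← transferMatrixFrom_base_zero] at hE
  obtain ⟨l, hl, w, hw, hMw⟩ :=
    exists_norm_eq_one_mulVec_eq_smul (det_transferMatrixFrom V E 0 p) hE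
  obtain ⟨u, hu, hu₀, hu₁⟩ := exists_mem_solutionSpace V E (w 0) (w 1)
  have hdata : ![u 0, u (-1)] = w := by ext i; fin_cases i <;> simp [hu₀, hu₁]
  have hmonodromy : ![u p, u (p - 1)] = l • ![u 0, u (-1)] := by
    rw [hdata, ← hMw, ← hdata]
    simpa using (transferMatrixFrom_mulVec hu 0 p).symm
  refine ⟨u, hu, ?_, l, hl, congrFun <| eq_of_mem_solutionSpace
    (hV.translate_mem_solutionSpace hu) (Submodule.smul_mem _ l hu) ?_ ?_⟩
  · rintro rfl
    exact hw (by simp [← hdata])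
  · simpa using congrFun hmonodromy 0
  · simpa [neg_add_eq_sub] using congrFun hmonodromy 1

theorem memℓp_top_of_add_eq_mul {𝕜 : Type*} [NormedField 𝕜] {u : ℤ → 𝕜} {c : ℤ} (hc : 0 < c)
    {l : 𝕜} (hl : ‖l‖ = 1) (hu : ∀ n, u (n + c) = l * u n) : Memℓp u ∞ :=
  memℓp_infty <| Set.Finite.bddAbove <|
    finite_range_of_periodic (c := c) (fun n => by simp [hu, hl]) hc

end Floquet

section Wronskian

/-- The discrete Wronskian at the bond `(n, n + 1)`. -/
def wronskian (u v : ℤ → ℂ) (n : ℤ) : ℂ :=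
  u (n + 1) * v n - u n * v (n + 1)

variable {V : ℤ → ℝ} {H : ℓ²(ℤ, ℂ) →L[ℂ] ℓ²(ℤ, ℂ)} (hH : IsSchrodingerOp V H) {z : ℂ} {u : ℤ → ℂ}

include hH in
theorem IsSchrodingerOp.wronskian_sub (hu : u ∈ solutionSpace V z) (ψ : ℓ²(ℤ, ℂ)) (n : ℤ) :
    wronskian u ψ n - wronskian u ψ (n - 1) =
      u n * (algebraMap ℂ (ℓ²(ℤ, ℂ) →L[ℂ] ℓ²(ℤ, ℂ)) z - H) ψ n := by
  rw [hH.algebraMap_sub_apply, wronskian, wronskian, sub_add_cancel]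
  linear_combination ψ n * hu n

theorem tendsto_wronskian_cofinite (hu : Memℓp u ∞) (ψ : ℓ²(ℤ, ℂ)) :
    Tendsto (wronskian u ψ) cofinite (𝓝 0) := by
  have hψ (χ : ℓ²(ℤ, ℂ)) := tendsto_cofinite_zero_of_memℓp (by simp) (lp.memℓp χ)
  have hu' := memℓp_top_comp hu (· + (1 : ℤ))
  rw [← sub_zero (0 : ℂ)]
  exact
    (isBoundedUnder_le_mul_tendsto_zero (memℓp_infty_iff.mp hu').isBoundedUnder_of_range (hψ ψ)).sub
      (isBoundedUnder_le_mul_tendsto_zero (memℓp_infty_iff.mp hu).isBoundedUnder_of_range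
        (hψ (shift 1 ψ)))

include hH in
theorem IsSchrodingerOp.mem_spectrum_of_memℓp_top (hu : u ∈ solutionSpace V z) (hu₀ : u ≠ 0)
    (hbdd : Memℓp u ∞) : z ∈ spectrum ℂ H := by
  obtain ⟨m, hm⟩ := Function.ne_iff.mp hu₀
  intro hz
  obtain ⟨B, hB⟩ := hz.exists_right_inv
  let δ : ℓ²(ℤ, ℂ) := lp.single 2 m 1
  have hδ : (algebraMap ℂ (ℓ²(ℤ, ℂ) →L[ℂ] ℓ²(ℤ, ℂ)) z - H) (B δ) = δ :=
    congrArg (fun T : ℓ²(ℤ, ℂ) →L[ℂ] ℓ²(ℤ, ℂ) => T δ) hB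
  have hjump (n : ℤ) : wronskian u (B δ) n - wronskian u (B δ) (n - 1) = u n * δ n := by
    rw [hH.wronskian_sub hu, hδ]
  have hconst := eq_sub_one_of_tendsto_cofinite (tendsto_wronskian_cofinite hbdd (B δ)) (m := m)
    fun n hn => sub_eq_zero.mp <| by simp [hjump, δ, hn]
  exact hm (by simpa [δ, sub_eq_zero.mpr hconst] using (hjump m).symm)

end Wronskian

/-- for a `p`-periodic potential, `E` lies in the spectrum iff the
trace of the monodromy matrix `A_p(E,V)` has absolute value at most `2`. -/
theorem statement19 (V : ℤ → ℝ) (p : ℕ) (hp : 1 ≤ p) (hper : IsPeriodic V p)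
    (H : lp (fun _ : ℤ => ℂ) 2 →L[ℂ] lp (fun _ : ℤ => ℂ) 2)
    (hH : IsSchrodingerOp V H) (E : ℝ) :
    (E : ℂ) ∈ spectrum ℂ H ↔ |(transferMatrix V E p).trace| ≤ 2 := by
  constructor
  · contrapose!
    exact hH.notMem_spectrum_of_two_lt_abs_trace hper
  · intro hE
    obtain ⟨u, hu, hu₀, l, hl, hfloquet⟩ := hper.exists_floquet_solution hE
    exact hH.mem_spectrum_of_memℓp_top hu hu₀
      (memℓp_top_of_add_eq_mul (by exact_mod_cast hp) hl hfloquet)
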